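/- arXiv:2502.18099 — 2 statements merged into one kernel-verified Lean document; each statement's English description precedes it below -/
import Mathlib

section
/- Let ν be a Borel probability measure on ℝ with finite first moment and let ε ≥ 0. For each integer K ≥ 1 let ℓ̃_K : ℝ → ℝ be a pointwise maximum of finitely many affine functions, such that ℓ̃_K(ξ) ≤ ℓ̃_{K+1}(ξ) ≤ ℓ(ξ) for all ξ ∈ ℝ and all K, and ℓ̃_K(ξ) → ℓ(ξ) as K → ∞ for every ξ ∈ ℝ, where ℓ(ξ) = log(1+e^{-ξ}). Define v* = − sup { ∫ ℓ dα : α ∈ U_ε(ν) } and v_K = − sup { ∫ ℓ̃_K dα : α ∈ U_ε(ν) }. Then: (i) v_K ≥ v* for every K; (ii) v_{K+1} ≤ v_K for every K; (iii) v_K converges to v* as K → ∞. -/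
open MeasureTheory ENNReal Real

/-- The logistic sigmoid σ(x) = 1/(1+e^{-x}). -/
noncomputable def logisticSigma (x : ℝ) : ℝ := 1 / (1 + Real.exp (-x))

/-- The logistic loss ℓ(ξ) = -log σ(ξ) = log(1+e^{-ξ}). -/
noncomputable def logisticLoss (x : ℝ) : ℝ := Real.log (1 + Real.exp (-x))

/-- γ is a coupling of α and β: its marginals are α and β. -/
def IsCoupling (γ : Measure (ℝ × ℝ)) (α β : Measure ℝ) : Prop :=
  γ.map Prod.fst = α ∧ γ.map Prod.snd = β

/-- Transport cost of a coupling: ∫ |x - y| dγ(x,y). -/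
noncomputable def transportCost (γ : Measure (ℝ × ℝ)) : ℝ≥0∞ :=
  ∫⁻ p, ENNReal.ofReal |p.1 - p.2| ∂γ

/-- The 1-Wasserstein ε-ball around ν: Borel probability measures admitting a
coupling with ν of transport cost at most ε. -/
def Uball (ε : ℝ) (ν : Measure ℝ) : Set (Measure ℝ) :=
  {α | IsProbabilityMeasure α ∧
    ∃ γ : Measure (ℝ × ℝ), IsCoupling γ α ν ∧ transportCost γ ≤ ENNReal.ofReal ε}

/-- f is a pointwise maximum of finitely many affine functions. -/
def IsMaxOfAffine (f : ℝ → ℝ) : Prop :=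
  ∃ (n : ℕ) (a b : Fin (n + 1) → ℝ), ∀ x, f x = ⨆ k, a k * x + b k


lemma logisticLoss_nonneg' (x : ℝ) : 0 ≤ logisticLoss x := by
  unfold logisticLoss
  apply Real.log_nonneg
  linarith [Real.exp_pos (-x)]

lemma logisticLoss_le' (x : ℝ) : logisticLoss x ≤ Real.log 2 + |x| := by
  unfold logisticLoss
  have h1 : 1 + Real.exp (-x) ≤ 2 * Real.exp |x| := by
    have := Real.exp_le_exp.2 (neg_le_abs x)
    have := Real.one_le_exp (abs_nonneg x)
    linarith
  calc Real.log (1 + Real.exp (-x)) ≤ Real.log (2 * Real.exp |x|) :=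
        Real.log_le_log (by positivity) h1
    _ = Real.log 2 + |x| := by
        rw [Real.log_mul (by norm_num) (by positivity), Real.log_exp]

lemma logisticLoss_meas' : Measurable logisticLoss := by
  unfold logisticLoss
  fun_prop

lemma ball_lintegral' {ν α : Measure ℝ} {ε : ℝ} (hα : α ∈ Uball ε ν) :
    ∫⁻ x, ENNReal.ofReal |x| ∂α ≤ ENNReal.ofReal ε + ∫⁻ x, ENNReal.ofReal |x| ∂ν := by
  obtain ⟨_, γ, ⟨h1, h2⟩, hc⟩ := hα
  have e1 : ∫⁻ x, ENNReal.ofReal |x| ∂α = ∫⁻ p, ENNReal.ofReal |p.1| ∂γ := by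
    rw [← h1, lintegral_map (by fun_prop) measurable_fst]
  have e2 : ∫⁻ x, ENNReal.ofReal |x| ∂ν = ∫⁻ p, ENNReal.ofReal |p.2| ∂γ := by
    rw [← h2, lintegral_map (by fun_prop) measurable_snd]
  rw [e1, e2]
  calc ∫⁻ p, ENNReal.ofReal |p.1| ∂γ
      ≤ ∫⁻ p, (ENNReal.ofReal |p.1 - p.2| + ENNReal.ofReal |p.2|) ∂γ := by
        apply lintegral_mono
        intro p
        show ENNReal.ofReal |p.1| ≤ ENNReal.ofReal |p.1 - p.2| + ENNReal.ofReal |p.2|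
        rw [← ENNReal.ofReal_add (abs_nonneg _) (abs_nonneg _)]
        apply ENNReal.ofReal_le_ofReal
        have := abs_add_le (p.1 - p.2) p.2
        simpa using this
    _ = ∫⁻ p, ENNReal.ofReal |p.1 - p.2| ∂γ + ∫⁻ p, ENNReal.ofReal |p.2| ∂γ :=
        lintegral_add_right _ (by fun_prop)
    _ ≤ _ := by
        gcongr
        exact hc

lemma ball_moment' {ν α : Measure ℝ} {ε : ℝ} (hε : 0 ≤ ε)
    (hm : Integrable (fun x : ℝ => |x|) ν) (hα : α ∈ Uball ε ν) :
    Integrable (fun x : ℝ => |x|) α ∧ ∫ x, |x| ∂α ≤ ε + ∫ x, |x| ∂ν := by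
  have h := ball_lintegral' hα
  rw [← ofReal_integral_eq_lintegral_ofReal hm (ae_of_all _ fun x => abs_nonneg x),
    ← ENNReal.ofReal_add hε (integral_nonneg fun x => abs_nonneg x)] at h
  have hi : Integrable (fun x : ℝ => |x|) α := by
    refine ⟨by fun_prop, ?_⟩
    rw [hasFiniteIntegral_iff_ofReal (ae_of_all _ fun x => abs_nonneg x)]
    exact h.trans_lt ENNReal.ofReal_lt_top
  refine ⟨hi, ?_⟩
  rw [← ofReal_integral_eq_lintegral_ofReal hi (ae_of_all _ fun x => abs_nonneg x)] at h
  exact (ENNReal.ofReal_le_ofReal_iff (add_nonneg hε (integral_nonneg fun x => abs_nonneg x))).1 h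

lemma self_mem_ball' (ν : Measure ℝ) (hν : IsProbabilityMeasure ν) (ε : ℝ) : ν ∈ Uball ε ν := by
  have hd : Measurable (fun x : ℝ => (x, x)) := by fun_prop
  refine ⟨hν, ν.map (fun x => (x, x)), ⟨?_, ?_⟩, ?_⟩
  · rw [Measure.map_map measurable_fst hd]
    exact Measure.map_id
  · rw [Measure.map_map measurable_snd hd]
    exact Measure.map_id
  · unfold transportCost
    rw [lintegral_map (by fun_prop) hd]
    simp

lemma logisticLoss_int' {α : Measure ℝ} [IsProbabilityMeasure α]
    (hm : Integrable (fun x : ℝ => |x|) α) : Integrable logisticLoss α := by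
  refine Integrable.mono' ((integrable_const (Real.log 2)).add hm)
    logisticLoss_meas'.aestronglyMeasurable (ae_of_all _ fun x => ?_)
  rw [Real.norm_eq_abs, abs_of_nonneg (logisticLoss_nonneg' x)]
  exact logisticLoss_le' x

lemma maxAffine_int' {α : Measure ℝ} [IsProbabilityMeasure α]
    (hm : Integrable (fun x : ℝ => |x|) α) {f : ℝ → ℝ} (hf : IsMaxOfAffine f)
    (hle : ∀ x, f x ≤ logisticLoss x) : Integrable f α := by
  obtain ⟨n, a, b, hab⟩ := hf
  have hmeas : Measurable f := by
    have : f = fun x => ⨆ k, a k * x + b k := funext hab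
    rw [this]
    exact Measurable.iSup fun k => by fun_prop
  have hlow : ∀ x, a 0 * x + b 0 ≤ f x := fun x => by
    rw [hab x]
    exact le_ciSup (f := fun k => a k * x + b k) (Set.finite_range _).bddAbove 0
  refine Integrable.mono' (((hm.const_mul |a 0|).add (integrable_const |b 0|)).add
    (logisticLoss_int' hm)) hmeas.aestronglyMeasurable (ae_of_all _ fun x => ?_)
  show ‖f x‖ ≤ |a 0| * |x| + |b 0| + logisticLoss x
  have h1 := hlow x
  have h2 := hle x
  have h3 := logisticLoss_nonneg' x
  have h4 := neg_abs_le (a 0 * x)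
  have h5 := neg_abs_le (b 0)
  have h6 := abs_nonneg (a 0 * x)
  have h7 := abs_nonneg (b 0)
  rw [← abs_mul, Real.norm_eq_abs, abs_le]
  constructor <;> linarith

/-- monotone tightening of the robust value under increasing
piecewise-linear underestimators of the logistic loss. -/
theorem stmt4 (ν : Measure ℝ) (hν : IsProbabilityMeasure ν)
    (hm : Integrable (fun x : ℝ => |x|) ν)
    (ε : ℝ) (hε : 0 ≤ ε)
    (L : ℕ → ℝ → ℝ)
    (hmax : ∀ K, 1 ≤ K → IsMaxOfAffine (L K))
    (hmono : ∀ K, 1 ≤ K → ∀ x, L K x ≤ L (K + 1) x)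
    (hle : ∀ K, 1 ≤ K → ∀ x, L K x ≤ logisticLoss x)
    (hlim : ∀ x, Filter.Tendsto (fun K => L K x) Filter.atTop (nhds (logisticLoss x)))
    (vstar : ℝ)
    (hvstar : vstar = -sSup ((fun α => ∫ x, logisticLoss x ∂α) '' Uball ε ν))
    (v : ℕ → ℝ)
    (hv : ∀ K, v K = -sSup ((fun α => ∫ x, L K x ∂α) '' Uball ε ν)) :
    (∀ K, 1 ≤ K → vstar ≤ v K) ∧
    (∀ K, 1 ≤ K → v (K + 1) ≤ v K) ∧
    Filter.Tendsto v Filter.atTop (nhds vstar) := by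
  have hmom := fun α (hα : α ∈ Uball ε ν) => ball_moment' hε hm hα
  have hiL : ∀ K, 1 ≤ K → ∀ α ∈ Uball ε ν, Integrable (L K) α := fun K hK α hα => by
    haveI := hα.1
    exact maxAffine_int' (hmom α hα).1 (hmax K hK) (hle K hK)
  have hil : ∀ α ∈ Uball ε ν, Integrable logisticLoss α := fun α hα => by
    haveI := hα.1
    exact logisticLoss_int' (hmom α hα).1
  have hne : (Uball ε ν).Nonempty := ⟨ν, self_mem_ball' ν hν ε⟩
  have hbd : BddAbove ((fun α => ∫ x, logisticLoss x ∂α) '' Uball ε ν) := by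
    refine ⟨Real.log 2 + (ε + ∫ x, |x| ∂ν), ?_⟩
    rintro _ ⟨α, hα, rfl⟩
    haveI := hα.1
    calc ∫ x, logisticLoss x ∂α ≤ ∫ x, (Real.log 2 + |x|) ∂α :=
          integral_mono (hil α hα) ((integrable_const _).add (hmom α hα).1) logisticLoss_le'
      _ = Real.log 2 + ∫ x, |x| ∂α := by
          rw [integral_add (integrable_const _) (hmom α hα).1]; simp
      _ ≤ _ := by linarith [(hmom α hα).2]
  have hLl : ∀ K, 1 ≤ K → ∀ α ∈ Uball ε ν, ∫ x, L K x ∂α ≤ ∫ x, logisticLoss x ∂α :=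
    fun K hK α hα => integral_mono (hiL K hK α hα) (hil α hα) (hle K hK)
  have hbdK : ∀ K, 1 ≤ K → BddAbove ((fun α => ∫ x, L K x ∂α) '' Uball ε ν) := fun K hK => by
    obtain ⟨C, hC⟩ := hbd
    refine ⟨C, ?_⟩
    rintro _ ⟨α, hα, rfl⟩
    exact (hLl K hK α hα).trans (hC ⟨α, hα, rfl⟩)
  have P1 : ∀ K, 1 ≤ K → vstar ≤ v K := by
    intro K hK
    rw [hvstar, hv K]
    apply neg_le_neg
    apply csSup_le (hne.image _)
    rintro _ ⟨α, hα, rfl⟩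
    exact (hLl K hK α hα).trans (le_csSup hbd ⟨α, hα, rfl⟩)
  refine ⟨P1, ?_, ?_⟩
  · intro K hK
    rw [hv K, hv (K + 1)]
    apply neg_le_neg
    apply csSup_le (hne.image _)
    rintro _ ⟨α, hα, rfl⟩
    exact (integral_mono (hiL K hK α hα) (hiL (K + 1) (by omega) α hα) (hmono K hK)).trans
      (le_csSup (hbdK (K + 1) (by omega)) ⟨α, hα, rfl⟩)
  · have hL1 : ∀ K, 1 ≤ K → ∀ x, L 1 x ≤ L K x := by
      intro K hK x
      induction K, hK using Nat.le_induction with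
      | base => exact le_rfl
      | succ n hn ih => exact ih.trans (hmono n hn x)
    rw [tendsto_order]
    constructor
    · intro c hc
      filter_upwards [Filter.eventually_ge_atTop 1] with K hK
      exact hc.trans_le (P1 K hK)
    · intro c hc
      have hc' : -c < sSup ((fun α => ∫ x, logisticLoss x ∂α) '' Uball ε ν) := by linarith
      obtain ⟨_, ⟨α, hα, rfl⟩, hlt⟩ := exists_lt_of_lt_csSup (hne.image _) hc'
      have ht : Filter.Tendsto (fun K => ∫ x, L K x ∂α) Filter.atTop
          (nhds (∫ x, logisticLoss x ∂α)) := by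
        refine tendsto_integral_filter_of_dominated_convergence
          (fun x => |L 1 x| + logisticLoss x) ?_ ?_ ?_ (ae_of_all _ hlim)
        · filter_upwards [Filter.eventually_ge_atTop 1] with K hK
          exact (hiL K hK α hα).1
        · filter_upwards [Filter.eventually_ge_atTop 1] with K hK
          refine ae_of_all _ fun x => ?_
          rw [Real.norm_eq_abs, abs_le]
          have h1 := hL1 K hK x
          have h2 := hle K hK x
          have h3 := logisticLoss_nonneg' x
          have h4 := neg_abs_le (L 1 x)
          have h5 := abs_nonneg (L 1 x)
          constructor <;> linarith
        · exact (hiL 1 le_rfl α hα).abs.add (hil α hα)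
      filter_upwards [Filter.eventually_ge_atTop 1, ht.eventually (lt_mem_nhds hlt)] with K hK hK2
      have := le_csSup (hbdK K hK) ⟨α, hα, rfl⟩
      rw [hv K]
      simp only at this
      linarith
end

section
/- Let ν₁ and ν₂ be Borel probability measures on ℝ with finite first moments, let ε ≥ 0, and define the follower value V(ν) = inf { ∫ log σ dα : α ∈ U_ε(ν) } for a Borel probability measure ν on ℝ with finite first moment. Then for every coupling γ₀ of ν₁ and ν₂, |V(ν₁) − V(ν₂)| ≤ ∫ |x-y| dγ₀(x,y). In particular, the follower value function is 1-Lipschitz with respect to the 1-Wasserstein distance between centers. -/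
open MeasureTheory ENNReal Real

theorem aux_lip_one {x y : ℝ} (h : x ≤ y) :
    Real.log (logisticSigma x) ≤ Real.log (logisticSigma y) ∧
    Real.log (logisticSigma y) ≤ Real.log (logisticSigma x) + (y - x) := by
  have e : ∀ z, Real.log (logisticSigma z) = - Real.log (1 + Real.exp (-z)) := by
    intro z
    rw [logisticSigma, one_div, Real.log_inv]
  have px := Real.exp_pos (-x)
  have py := Real.exp_pos (-y)
  rw [e, e]
  have hle : Real.exp (-y) ≤ Real.exp (-x) := Real.exp_le_exp.2 (by linarith)
  constructor
  · have := Real.log_le_log (by linarith) (show 1 + Real.exp (-y) ≤ 1 + Real.exp (-x) by linarith)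
    linarith
  · have h1 : 1 + Real.exp (-x) ≤ Real.exp (y - x) * (1 + Real.exp (-y)) := by
      have h2 : Real.exp (y - x) * Real.exp (-y) = Real.exp (-x) := by
        rw [← Real.exp_add]; congr 1; ring
      have h3 : 1 ≤ Real.exp (y - x) := Real.one_le_exp (by linarith)
      rw [mul_add, h2]; linarith
    have := Real.log_le_log (by linarith) h1
    rw [Real.log_mul (Real.exp_pos _).ne' (by linarith), Real.log_exp] at this
    linarith

theorem aux_lip (x y : ℝ) :
    |Real.log (logisticSigma x) - Real.log (logisticSigma y)| ≤ |x - y| := by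
  rcases le_total x y with h | h
  · obtain ⟨h1, h2⟩ := aux_lip_one h
    rw [abs_sub_comm, abs_sub_comm x y, abs_of_nonneg (by linarith), abs_of_nonneg (by linarith)]
    linarith
  · obtain ⟨h1, h2⟩ := aux_lip_one h
    rw [abs_of_nonneg (by linarith), abs_of_nonneg (by linarith)]
    linarith

theorem aux_meas : Measurable (fun x => Real.log (logisticSigma x)) := by
  unfold logisticSigma
  fun_prop

theorem aux_int (ν : Measure ℝ) [IsProbabilityMeasure ν]
    (hm : Integrable (fun x : ℝ => |x|) ν) :
    Integrable (fun x => Real.log (logisticSigma x)) ν := by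
  refine Integrable.mono' (hm.add (integrable_const |Real.log (logisticSigma 0)|))
    aux_meas.aestronglyMeasurable (Filter.Eventually.of_forall fun x => ?_)
  have := aux_lip x 0
  have h2 := abs_sub_abs_le_abs_sub (Real.log (logisticSigma x)) (Real.log (logisticSigma 0))
  simp only [sub_zero] at this
  simp only [Real.norm_eq_abs, Pi.add_apply]
  linarith

theorem aux_coupling {γ : Measure (ℝ × ℝ)} {α β : Measure ℝ} (hγ : IsCoupling γ α β)
    (hc : transportCost γ ≠ ∞)
    (hβ : Integrable (fun x => Real.log (logisticSigma x)) β) :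
    Integrable (fun x => Real.log (logisticSigma x)) α ∧
    |∫ x, Real.log (logisticSigma x) ∂α - ∫ x, Real.log (logisticSigma x) ∂β|
      ≤ (transportCost γ).toReal := by
  obtain ⟨ha, hb⟩ := hγ
  set f := fun x => Real.log (logisticSigma x) with hf
  have fm : Measurable f := aux_meas
  have hd : Integrable (fun p : ℝ × ℝ => |p.1 - p.2|) γ := by
    refine ⟨by fun_prop, ?_⟩
    rw [hasFiniteIntegral_iff_ofReal (Filter.Eventually.of_forall fun p => abs_nonneg _)]
    exact lt_top_iff_ne_top.2 hc
  have hcost : (transportCost γ).toReal = ∫ p, |p.1 - p.2| ∂γ := by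
    rw [integral_eq_lintegral_of_nonneg_ae (Filter.Eventually.of_forall fun p => abs_nonneg _)
      hd.1]
    rfl
  have i2 : Integrable (fun p : ℝ × ℝ => f p.2) γ := by
    rw [← hb] at hβ
    exact hβ.comp_measurable measurable_snd
  have id : Integrable (fun p : ℝ × ℝ => f p.1 - f p.2) γ := by
    refine hd.mono' (by fun_prop) (Filter.Eventually.of_forall fun p => ?_)
    exact aux_lip p.1 p.2
  have i1 : Integrable (fun p : ℝ × ℝ => f p.1) γ := by
    refine (id.add i2).congr (Filter.Eventually.of_forall fun p => ?_)
    simp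
  have e1 : ∫ x, f x ∂α = ∫ p, f p.1 ∂γ := by
    rw [← ha, integral_map measurable_fst.aemeasurable fm.aestronglyMeasurable]
  have e2 : ∫ x, f x ∂β = ∫ p, f p.2 ∂γ := by
    rw [← hb, integral_map measurable_snd.aemeasurable fm.aestronglyMeasurable]
  constructor
  · rw [← ha]
    exact (integrable_map_measure fm.aestronglyMeasurable measurable_fst.aemeasurable).2 i1
  · change |∫ x, f x ∂α - ∫ x, f x ∂β| ≤ _
    rw [e1, e2, ← integral_sub i1 i2, hcost]
    exact (abs_integral_le_integral_abs).trans
      (integral_mono id.abs hd fun p => aux_lip p.1 p.2)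

theorem aux_swap {γ : Measure (ℝ × ℝ)} {α β : Measure ℝ} (hγ : IsCoupling γ α β) :
    IsCoupling (γ.map Prod.swap) β α ∧ transportCost (γ.map Prod.swap) = transportCost γ := by
  refine ⟨⟨?_, ?_⟩, ?_⟩
  · rw [Measure.map_map measurable_fst measurable_swap]; exact hγ.2
  · rw [Measure.map_map measurable_snd measurable_swap]; exact hγ.1
  · unfold transportCost
    rw [lintegral_map (by fun_prop) measurable_swap]
    simp [abs_sub_comm]

/-- Gluing of two measures with the same first marginal. -/
theorem aux_glue {ρ τ : Measure (ℝ × ℝ)} {ν : Measure ℝ} [IsProbabilityMeasure ν]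
    (hρ : ρ.map Prod.fst = ν) (hτ : τ.map Prod.fst = ν) :
    ∃ P : Measure (ℝ × ℝ × ℝ), IsProbabilityMeasure P ∧
      P.map (fun q => (q.1, q.2.1)) = ρ ∧ P.map (fun q => (q.1, q.2.2)) = τ := by
  have pρ : IsProbabilityMeasure ρ := by
    have : IsProbabilityMeasure (ρ.map Prod.fst) := by rw [hρ]; infer_instance
    exact Measure.isProbabilityMeasure_of_map Prod.fst
  have pτ : IsProbabilityMeasure τ := by
    have : IsProbabilityMeasure (τ.map Prod.fst) := by rw [hτ]; infer_instance
    exact Measure.isProbabilityMeasure_of_map Prod.fst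
  have dρ : ν.compProd ρ.condKernel = ρ := by
    conv_rhs => rw [← ρ.disintegrate ρ.condKernel]
    rw [Measure.fst, hρ]
  have dτ : ν.compProd τ.condKernel = τ := by
    conv_rhs => rw [← τ.disintegrate τ.condKernel]
    rw [Measure.fst, hτ]
  refine ⟨ν.compProd (ρ.condKernel.prod τ.condKernel), inferInstance, ?_, ?_⟩
  · conv_rhs => rw [← dρ]
    have := Measure.compProd_map (μ := ν) (κ := ρ.condKernel.prod τ.condKernel)
      (f := Prod.fst) measurable_fst
    rw [← ProbabilityTheory.Kernel.fst_eq, ProbabilityTheory.Kernel.fst_prod] at this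
    rw [this]; rfl
  · conv_rhs => rw [← dτ]
    have := Measure.compProd_map (μ := ν) (κ := ρ.condKernel.prod τ.condKernel)
      (f := Prod.snd) measurable_snd
    rw [← ProbabilityTheory.Kernel.snd_eq, ProbabilityTheory.Kernel.snd_prod] at this
    rw [this]; rfl

theorem aux_transfer {γ γ₀ : Measure (ℝ × ℝ)} {α ν₁ ν₂ : Measure ℝ} [IsProbabilityMeasure ν₁]
    (hγ : IsCoupling γ α ν₁) (hγ₀ : IsCoupling γ₀ ν₁ ν₂) :
    ∃ α' : Measure ℝ, IsProbabilityMeasure α' ∧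
      (∃ γ', IsCoupling γ' α' ν₂ ∧ transportCost γ' = transportCost γ) ∧
      (∃ γ', IsCoupling γ' α' α ∧ transportCost γ' = transportCost γ₀) := by
  obtain ⟨hs, hsc⟩ := aux_swap hγ
  obtain ⟨P, hP, h1, h2⟩ := aux_glue hs.1 hγ₀.1
  have m : Measurable (fun q : ℝ × ℝ × ℝ => q.2.2 + (q.2.1 - q.1)) := by fun_prop
  refine ⟨P.map (fun q => q.2.2 + (q.2.1 - q.1)),
    Measure.isProbabilityMeasure_map m.aemeasurable,
    ⟨P.map (fun q => (q.2.2 + (q.2.1 - q.1), q.2.2)), ⟨?_, ?_⟩, ?_⟩,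
    ⟨P.map (fun q => (q.2.2 + (q.2.1 - q.1), q.2.1)), ⟨?_, ?_⟩, ?_⟩⟩
  · rw [Measure.map_map (by fun_prop) (by fun_prop)]; rfl
  · rw [Measure.map_map (by fun_prop) (by fun_prop), ← hγ₀.2, ← h2,
      Measure.map_map (by fun_prop) (by fun_prop)]; rfl
  · rw [← hsc, ← h1]
    unfold transportCost
    rw [lintegral_map (by fun_prop) (by fun_prop), lintegral_map (by fun_prop) (by fun_prop)]
    refine lintegral_congr fun q => ?_
    simp [abs_sub_comm]
  · rw [Measure.map_map (by fun_prop) (by fun_prop)]; rfl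
  · rw [Measure.map_map (by fun_prop) (by fun_prop), ← hs.2, ← h1,
      Measure.map_map (by fun_prop) (by fun_prop)]; rfl
  · rw [← h2]
    unfold transportCost
    rw [lintegral_map (by fun_prop) (by fun_prop), lintegral_map (by fun_prop) (by fun_prop)]
    refine lintegral_congr fun q => ?_
    dsimp only
    rw [abs_sub_comm q.1]
    congr 2
    ring

theorem aux_bdd (ε : ℝ) (ν : Measure ℝ)
    (hf : Integrable (fun x => Real.log (logisticSigma x)) ν) :
    BddBelow ((fun α => ∫ x, Real.log (logisticSigma x) ∂α) '' Uball ε ν) := by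
  refine ⟨∫ x, Real.log (logisticSigma x) ∂ν - (ENNReal.ofReal ε).toReal, ?_⟩
  rintro _ ⟨α, ⟨-, γ, hγ, hc⟩, rfl⟩
  have h := (aux_coupling hγ (ne_top_of_le_ne_top ENNReal.ofReal_ne_top hc) hf).2
  have h2 := ENNReal.toReal_mono ENNReal.ofReal_ne_top hc
  have h3 := (abs_le.1 h).1
  dsimp only
  linarith

theorem aux_self (ε : ℝ) (ν : Measure ℝ) [IsProbabilityMeasure ν] : ν ∈ Uball ε ν := by
  refine ⟨inferInstance, ν.map (fun x => (x, x)), ⟨?_, ?_⟩, ?_⟩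
  · rw [Measure.map_map (by fun_prop) (by fun_prop)]; exact Measure.map_id
  · rw [Measure.map_map (by fun_prop) (by fun_prop)]; exact Measure.map_id
  · unfold transportCost
    rw [lintegral_map (by fun_prop) (by fun_prop)]
    simp

theorem aux_side (ε : ℝ) (ν₁ ν₂ : Measure ℝ)
    [IsProbabilityMeasure ν₁] [IsProbabilityMeasure ν₂]
    (hf₁ : Integrable (fun x => Real.log (logisticSigma x)) ν₁)
    (hf₂ : Integrable (fun x => Real.log (logisticSigma x)) ν₂)
    (γ₀ : Measure (ℝ × ℝ)) (hγ₀ : IsCoupling γ₀ ν₁ ν₂) (hc : transportCost γ₀ ≠ ∞) :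
    sInf ((fun α => ∫ x, Real.log (logisticSigma x) ∂α) '' Uball ε ν₂) -
      (transportCost γ₀).toReal ≤
    sInf ((fun α => ∫ x, Real.log (logisticSigma x) ∂α) '' Uball ε ν₁) := by
  refine le_csInf ⟨_, ν₁, aux_self ε ν₁, rfl⟩ ?_
  rintro _ ⟨α, ⟨-, γ, hγ, hcγ⟩, rfl⟩
  obtain ⟨α', hp, ⟨γ', hγ', e'⟩, γ'', hγ'', e''⟩ := aux_transfer hγ hγ₀
  have ia := (aux_coupling hγ (ne_top_of_le_ne_top ENNReal.ofReal_ne_top hcγ) hf₁).1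
  have h := (aux_coupling hγ'' (by rwa [e'']) ia).2
  rw [e''] at h
  have h3 := (abs_le.1 h).2
  have h4 := csInf_le (aux_bdd ε ν₂ hf₂) ⟨α', ⟨hp, γ', hγ', e' ▸ hcγ⟩, rfl⟩
  dsimp only at h4 ⊢
  linarith

/-- the follower value V(ν) = inf over the ε-ball of the expected
log-likelihood is 1-Lipschitz in the center, in the sense that for every
coupling γ₀ of ν₁ and ν₂, |V(ν₁) − V(ν₂)| is bounded by the transport cost. -/
theorem stmt15 (ε : ℝ) (hε : 0 ≤ ε)
    (V : Measure ℝ → ℝ)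
    (hV : ∀ ν : Measure ℝ,
      V ν = sInf ((fun α => ∫ x, Real.log (logisticSigma x) ∂α) '' Uball ε ν))
    (ν₁ ν₂ : Measure ℝ)
    (h₁ : IsProbabilityMeasure ν₁) (h₂ : IsProbabilityMeasure ν₂)
    (hm₁ : Integrable (fun x : ℝ => |x|) ν₁)
    (hm₂ : Integrable (fun x : ℝ => |x|) ν₂)
    (γ₀ : Measure (ℝ × ℝ)) (hγ₀ : IsCoupling γ₀ ν₁ ν₂) :
    ENNReal.ofReal |V ν₁ - V ν₂| ≤ transportCost γ₀ := by
  by_cases hc : transportCost γ₀ = ∞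
  · rw [hc]; exact le_top
  have hf₁ := aux_int ν₁ hm₁
  have hf₂ := aux_int ν₂ hm₂
  obtain ⟨hs, hsc⟩ := aux_swap hγ₀
  have a := aux_side ε ν₁ ν₂ hf₁ hf₂ γ₀ hγ₀ hc
  have b := aux_side ε ν₂ ν₁ hf₂ hf₁ _ hs (by rwa [hsc])
  rw [hsc] at b
  rw [← hV, ← hV] at a b
  refine ENNReal.ofReal_le_of_le_toReal (abs_le.2 ⟨?_, ?_⟩) <;> linarith
end
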